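/- arXiv:math/0301178 — 2 statements merged into one kernel-verified Lean document; each statement's English description precedes it below -/
import Mathlib

section
/- Let S₁ = (n₁,…,n_k) and S₂ = (m₁,…,m_l) be tuples of integers at least 2 with (n_i, n_j) = 1 and (m_i, m_j) = 1 for i ≠ j. If Γ(S₁) and Γ(S₂) are quasi-isometric, then k = l. -/
/-- `f : X → Y` is a `(K,C)`-quasi-isometry with respect to the distance
functions `dX`, `dY`. -/
def IsQI {X Y : Type*} (K C : ℝ) (dX : X → X → ℝ) (dY : Y → Y → ℝ)
    (f : X → Y) : Prop :=
  (∀ x₁ x₂ : X, dX x₁ x₂ / K - C ≤ dY (f x₁) (f x₂)) ∧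
  (∀ x₁ x₂ : X, dY (f x₁) (f x₂) ≤ K * dX x₁ x₂ + C) ∧
  (∀ y : Y, ∃ x : X, dY (f x) y ≤ C)

/-- The word metric on a group `G` associated to a generating set `S`:
the distance from `g` to `h` is the length of a shortest word in the
elements of `S` and their inverses representing `g⁻¹ * h`. -/
noncomputable def wordDist {G : Type*} [Group G] (S : Set G) (g h : G) : ℝ :=
  sInf {r : ℝ | ∃ L : List G, (∀ x ∈ L, x ∈ S ∨ x⁻¹ ∈ S) ∧
      L.prod = g⁻¹ * h ∧ r = L.length}

/-- Two groups are quasi-isometric if, when equipped with word metrics coming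
from finite generating sets, there is a quasi-isometry between them. -/
def QuasiIsometricGroups (G H : Type*) [Group G] [Group H] : Prop :=
  ∃ (S : Finset G) (T : Finset H),
    Subgroup.closure (S : Set G) = ⊤ ∧ Subgroup.closure (T : Set H) = ⊤ ∧
    ∃ (K C : ℝ) (f : G → H), 1 ≤ K ∧ 0 ≤ C ∧
      IsQI K C (wordDist (S : Set G)) (wordDist (T : Set H)) f

/-- Two groups are (abstractly) commensurable if they contain isomorphic
subgroups of finite index. -/
def CommensurableGroups (G H : Type*) [Group G] [Group H] : Prop :=
  ∃ (G₁ : Subgroup G) (H₁ : Subgroup H),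
    G₁.FiniteIndex ∧ H₁.FiniteIndex ∧ Nonempty (G₁ ≃* H₁)

/-- The relators for the group
`Γ(n₁,…,n_k) = ⟨a₁,…,a_k, b ∣ aᵢ⁻¹ b aᵢ = b^{nᵢ}, aᵢaⱼ = aⱼaᵢ (i ≠ j)⟩`.
The generator `aᵢ` is `Sum.inl i` and `b` is `Sum.inr ()`. -/
def gammaRels {k : ℕ} (n : Fin k → ℕ) : Set (FreeGroup (Fin k ⊕ Unit)) :=
  {r | (∃ i : Fin k,
        r = (FreeGroup.of (Sum.inl i))⁻¹ * FreeGroup.of (Sum.inr ()) *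
            FreeGroup.of (Sum.inl i) * (FreeGroup.of (Sum.inr ()) ^ (n i))⁻¹) ∨
      (∃ i j : Fin k, i ≠ j ∧
        r = FreeGroup.of (Sum.inl i) * FreeGroup.of (Sum.inl j) *
            (FreeGroup.of (Sum.inl i))⁻¹ * (FreeGroup.of (Sum.inl j))⁻¹)}

/-- The group `Γ(n₁,…,n_k)` given by the presentation
`⟨a₁,…,a_k, b ∣ aᵢ⁻¹ b aᵢ = b^{nᵢ}, aᵢaⱼ = aⱼaᵢ (i ≠ j)⟩`. -/
def GammaGroup {k : ℕ} (n : Fin k → ℕ) : Type := PresentedGroup (gammaRels n)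

instance {k : ℕ} (n : Fin k → ℕ) : Group (GammaGroup n) := by
  unfold GammaGroup; infer_instance

/-- The generator `aᵢ` of `Γ(n₁,…,n_k)`. -/
def gammaA {k : ℕ} (n : Fin k → ℕ) (i : Fin k) : GammaGroup n :=
  PresentedGroup.of (rels := gammaRels n) (Sum.inl i)

/-- The generator `b` of `Γ(n₁,…,n_k)`. -/
def gammaB {k : ℕ} (n : Fin k → ℕ) : GammaGroup n :=
  PresentedGroup.of (rels := gammaRels n) (Sum.inr ())

/-- The solvable Baumslag–Solitar group `BS(1,n) = ⟨a, b ∣ a b a⁻¹ = bⁿ⟩`.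
The generator `a` is `true` and `b` is `false`. -/
def BS (n : ℕ) : Type :=
  PresentedGroup {FreeGroup.of true * FreeGroup.of false * (FreeGroup.of true)⁻¹ *
    (FreeGroup.of false ^ n)⁻¹}

instance (n : ℕ) : Group (BS n) := by unfold BS; infer_instance

/-!
Suppose `f : Γ(m) → Γ(n)` is a quasi-isometric embedding, where `m` has length `l` and `n` has
length `k`. Composing it with `z ↦ a₁ ^ z₁ ⋯ a_l ^ z_l` embeds `ℝˡ` quasi-isometrically in `Γ(n)`.
The exponent sums of `a₁, …, a_k` give a Lipschitz height `Γ(n) → ℤᵏ`. If `k < l`, a limit of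
rescalings of the composite `ℝˡ → ℤᵏ` is a Lipschitz map `ℝˡ → ℝᵏ`, which by Rademacher's theorem
is differentiable somewhere, with a derivative that has a kernel. So there are arbitrarily long
segments in `ℝˡ` along which the height is constant up to a small proportion of the length `‖v‖`.
Cut such a segment into `M` steps. As `b` is exponentially distorted, a path in `Γ(n)` with `M`
steps of length `D` and height variation `H` has displacement at most `c * (M + H + D)`. Here `H`
and `D ≈ ‖v‖ / M` are both small compared with `‖v‖`, a contradiction. The distortion of `b`
requires `0 < k`; for `k = 0` the group `Γ(n)` is infinite cyclic while `Γ(m)` has exponential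
growth.
-/

section Coarse

/-- The distance function `d` is bounded by an affine function of `d'`. -/
def CoarselyLE {X : Type*} (d d' : X → X → ℝ) : Prop :=
  ∃ K C : ℝ, 1 ≤ K ∧ 0 ≤ C ∧ ∀ x y, d x y ≤ K * d' x y + C

/-- `f` is a quasi-isometric embedding: it distorts distances at most affinely, with no condition
on the size of its image. -/
structure IsQIEmbedding {X Y : Type*} (dX : X → X → ℝ) (dY : Y → Y → ℝ) (f : X → Y) : Prop where
  upper : CoarselyLE (fun x x' => dY (f x) (f x')) dX
  lower : CoarselyLE dX (fun x x' => dY (f x) (f x'))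

variable {X Y Z : Type*} {dX : X → X → ℝ} {dY : Y → Y → ℝ} {dZ : Z → Z → ℝ}

theorem CoarselyLE.trans {d₁ d₂ d₃ : X → X → ℝ} (h₁₂ : CoarselyLE d₁ d₂) (h₂₃ : CoarselyLE d₂ d₃) :
    CoarselyLE d₁ d₃ := by
  obtain ⟨K₁, C₁, hK₁, hC₁, h₁₂⟩ := h₁₂
  obtain ⟨K₂, C₂, hK₂, hC₂, h₂₃⟩ := h₂₃
  refine ⟨K₁ * K₂, K₁ * C₂ + C₁, one_le_mul_of_one_le_of_one_le hK₁ hK₂, by positivity,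
    fun x y => ?_⟩
  calc d₁ x y ≤ K₁ * d₂ x y + C₁ := h₁₂ x y
    _ ≤ K₁ * (K₂ * d₃ x y + C₂) + C₁ := by gcongr; exact h₂₃ x y
    _ = K₁ * K₂ * d₃ x y + (K₁ * C₂ + C₁) := by ring

theorem CoarselyLE.comp {d d' : Y → Y → ℝ} (h : CoarselyLE d d') (f : X → Y) :
    CoarselyLE (fun x x' => d (f x) (f x')) (fun x x' => d' (f x) (f x')) :=
  let ⟨K, C, hK, hC, h⟩ := h
  ⟨K, C, hK, hC, fun x y => h (f x) (f y)⟩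

theorem IsQIEmbedding.comp {g : Y → Z} {f : X → Y} (hg : IsQIEmbedding dY dZ g)
    (hf : IsQIEmbedding dX dY f) : IsQIEmbedding dX dZ (g ∘ f) where
  upper := (hg.upper.comp f).trans hf.upper
  lower := hf.lower.trans (hg.lower.comp f)

theorem IsQI.dist_le {K C : ℝ} {f : X → Y} (hf : IsQI K C dX dY f) (hK : 0 < K) (x y : X) :
    dX x y ≤ K * dY (f x) (f y) + K * C := by
  have h := hf.1 x y
  rw [sub_le_iff_le_add, div_le_iff₀ hK] at h
  linarith

theorem IsQI.isQIEmbedding {K C : ℝ} {f : X → Y} (hf : IsQI K C dX dY f) (hK : 1 ≤ K)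
    (hC : 0 ≤ C) : IsQIEmbedding dX dY f where
  upper := ⟨K, C, hK, hC, hf.2.1⟩
  lower := ⟨K, K * C, hK, by positivity, hf.dist_le (by positivity)⟩

theorem IsQI.exists_isQIEmbedding_symm {K C : ℝ} {f : X → Y} (hf : IsQI K C dX dY f)
    (hK : 1 ≤ K) (hC : 0 ≤ C) (hcomm : ∀ x y, dY x y = dY y x)
    (htri : ∀ x y z, dY x z ≤ dY x y + dY y z) : ∃ g : Y → X, IsQIEmbedding dY dX g := by
  choose g hg using hf.2.2
  refine ⟨g, ⟨K, K * (3 * C), hK, by positivity, fun x y => ?_⟩,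
    ⟨K, 3 * C, hK, by positivity, fun x y => ?_⟩⟩
  · have hfg : dY (f (g x)) (f (g y)) ≤ dY x y + 2 * C := by
      linarith [htri (f (g x)) x (f (g y)), htri x y (f (g y)), hg x, hg y, hcomm y (f (g y))]
    calc dX (g x) (g y) ≤ K * dY (f (g x)) (f (g y)) + K * C := hf.dist_le (by positivity) _ _
      _ ≤ K * (dY x y + 2 * C) + K * C := by gcongr
      _ = K * dY x y + K * (3 * C) := by ring
  · linarith [htri x (f (g x)) y, htri (f (g x)) (f (g y)) y, hg x, hg y, hcomm x (f (g x)),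
      hf.2.1 (g x) (g y)]

end Coarse

section WordMetric

variable {G : Type*} [Group G]

theorem wordDist_nonneg (S : Set G) (g h : G) : 0 ≤ wordDist S g h := by
  apply Real.sInf_nonneg
  rintro r ⟨L, -, -, rfl⟩
  positivity

theorem wordDist_le_length {S : Set G} {g h : G} {L : List G} (hL : ∀ x ∈ L, x ∈ S ∨ x⁻¹ ∈ S)
    (hprod : L.prod = g⁻¹ * h) : wordDist S g h ≤ L.length :=
  csInf_le ⟨0, by rintro r ⟨L, -, -, rfl⟩; positivity⟩ ⟨L, hL, hprod, rfl⟩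

theorem wordDist_mul_left (S : Set G) (x g h : G) :
    wordDist S (x * g) (x * h) = wordDist S g h := by
  simp [wordDist, mul_assoc]

theorem wordDist_eq_wordDist_one (S : Set G) (g h : G) :
    wordDist S g h = wordDist S 1 (g⁻¹ * h) := by
  simpa using (wordDist_mul_left S g⁻¹ g h).symm

theorem wordDist_self (S : Set G) (g : G) : wordDist S g g = 0 := by
  refine le_antisymm ?_ (wordDist_nonneg S g g)
  simpa using wordDist_le_length (S := S) (g := g) (h := g) (L := []) (by simp) (by simp)

theorem wordDist_one_le_one {S : Set G} {g : G} (hg : g ∈ S) : wordDist S 1 g ≤ 1 := by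
  simpa using wordDist_le_length (S := S) (g := 1) (h := g) (L := [g]) (by simp [hg]) (by simp)

variable {S : Set G} (hS : Subgroup.closure S = ⊤)

include hS

theorem exists_list_prod_eq (x : G) :
    ∃ L : List G, (∀ y ∈ L, y ∈ S ∨ y⁻¹ ∈ S) ∧ L.prod = x := by
  have hx : x ∈ (Subgroup.closure S).toSubmonoid := by simp [hS]
  rw [Subgroup.closure_toSubmonoid] at hx
  exact Submonoid.exists_list_of_mem_closure hx

theorem exists_list_wordDist_eq (g h : G) :
    ∃ L : List G, (∀ x ∈ L, x ∈ S ∨ x⁻¹ ∈ S) ∧ L.prod = g⁻¹ * h ∧ wordDist S g h = L.length := by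
  classical
  have hex : ∃ N : ℕ, ∃ L : List G, (∀ x ∈ L, x ∈ S ∨ x⁻¹ ∈ S) ∧ L.prod = g⁻¹ * h ∧
      L.length = N := by
    obtain ⟨L, hL, hprod⟩ := exists_list_prod_eq hS (g⁻¹ * h)
    exact ⟨_, L, hL, hprod, rfl⟩
  obtain ⟨L, hL, hprod, hlen⟩ := Nat.find_spec hex
  refine ⟨L, hL, hprod, (wordDist_le_length hL hprod).antisymm ?_⟩
  refine le_csInf ⟨(L.length : ℝ), L, hL, hprod, rfl⟩ ?_
  rintro r ⟨L', hL', hprod', rfl⟩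
  rw [hlen]
  exact_mod_cast Nat.find_min' hex ⟨L', hL', hprod', rfl⟩

theorem wordDist_triangle (g h k : G) : wordDist S g k ≤ wordDist S g h + wordDist S h k := by
  obtain ⟨L, hL, hprod, hlen⟩ := exists_list_wordDist_eq hS g h
  obtain ⟨L', hL', hprod', hlen'⟩ := exists_list_wordDist_eq hS h k
  have happend : ∀ x ∈ L ++ L', x ∈ S ∨ x⁻¹ ∈ S := fun x hx =>
    (List.mem_append.1 hx).elim (hL x) (hL' x)
  rw [hlen, hlen']
  simpa using wordDist_le_length happend (g := g) (h := k)
    (by rw [List.prod_append, hprod, hprod']; group)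

theorem wordDist_comm (g h : G) : wordDist S g h = wordDist S h g := by
  have hle : ∀ g h, wordDist S h g ≤ wordDist S g h := by
    intro g h
    obtain ⟨L, hL, hprod, hlen⟩ := exists_list_wordDist_eq hS g h
    have hinv : ∀ x ∈ (L.map (·⁻¹)).reverse, x ∈ S ∨ x⁻¹ ∈ S := by
      simp only [List.mem_reverse, List.mem_map]
      rintro _ ⟨y, hy, rfl⟩
      simpa using (hL y hy).symm
    rw [hlen]
    simpa using wordDist_le_length hinv (g := h) (h := g)
      (by rw [← List.prod_inv_reverse, hprod]; group)
  exact (hle h g).antisymm (hle g h)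

theorem wordDist_one_mul_le (g h : G) :
    wordDist S 1 (g * h) ≤ wordDist S 1 g + wordDist S 1 h := by
  simpa [wordDist_eq_wordDist_one S g] using wordDist_triangle hS 1 g (g * h)

theorem wordDist_one_inv (g : G) : wordDist S 1 g⁻¹ = wordDist S 1 g := by
  rw [wordDist_comm hS, wordDist_eq_wordDist_one]
  simp

theorem wordDist_one_pow_le {g : G} (hg : g ∈ S) (r : ℕ) : wordDist S 1 (g ^ r) ≤ r := by
  induction r with
  | zero => simp [wordDist_self]
  | succ r ih =>
    rw [pow_succ]
    push_cast
    linarith [wordDist_one_mul_le hS (g ^ r) g, wordDist_one_le_one hg]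

theorem wordDist_one_zpow_eq (g : G) (r : ℤ) :
    wordDist S 1 (g ^ r) = wordDist S 1 (g ^ r.natAbs) := by
  obtain ⟨a, rfl | rfl⟩ := r.eq_nat_or_neg
  · simp
  · simp [wordDist_one_inv hS]

theorem le_mul_wordDist {φ : G → ℝ} {c : ℝ} (hone : φ 1 ≤ 0)
    (hmul : ∀ x y, φ (x * y) ≤ φ x + φ y) (hc : ∀ x, x ∈ S ∨ x⁻¹ ∈ S → φ x ≤ c) (g h : G) :
    φ (g⁻¹ * h) ≤ c * wordDist S g h := by
  obtain ⟨L, hL, hprod, hlen⟩ := exists_list_wordDist_eq hS g h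
  rw [hlen, ← hprod]
  clear hprod hlen
  induction L with
  | nil => simpa using hone
  | cons x L ih =>
    have hx := hc x (hL x List.mem_cons_self)
    have hmul := hmul x L.prod
    have ih := ih fun y hy => hL y (List.mem_cons_of_mem x hy)
    simp only [List.prod_cons, List.length_cons]
    push_cast
    linarith

theorem coarselyLE_wordDist {T : Set G} (hSfin : S.Finite) (hT : Subgroup.closure T = ⊤) :
    CoarselyLE (wordDist T) (wordDist S) := by
  obtain ⟨c, hc⟩ := ((hSfin.union hSfin.inv).image (wordDist T 1)).bddAbove
  refine ⟨max c 1, 0, le_max_right c 1, le_rfl, fun g h => ?_⟩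
  rw [wordDist_eq_wordDist_one T, add_zero]
  refine le_mul_wordDist hS (wordDist_self T 1).le (wordDist_one_mul_le hT) (fun x hx => ?_) g h
  exact (hc ⟨x, by simpa using hx, rfl⟩).trans (le_max_left c 1)

theorem isQIEmbedding_id_wordDist {T : Set G} (hSfin : S.Finite) (hTfin : T.Finite)
    (hT : Subgroup.closure T = ⊤) : IsQIEmbedding (wordDist S) (wordDist T) id where
  upper := coarselyLE_wordDist hS hSfin hT
  lower := coarselyLE_wordDist hT hTfin hS

end WordMetric

section Growth

open scoped Pointwise

variable {G H : Type*} [Group G] [Group H]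

/-- The closed ball of radius `r` about the identity in the word metric. -/
def wordBall (S : Set G) (r : ℕ) : Set G := {g | wordDist S 1 g ≤ r}

theorem finite_wordBall {S : Set G} (hSfin : S.Finite) (hS : Subgroup.closure S = ⊤) (r : ℕ) :
    (wordBall S r).Finite := by
  have hmem : ∀ L : List G, (∀ x ∈ L, x ∈ S ∨ x⁻¹ ∈ S) → L.prod ∈ (S ∪ S⁻¹) ^ L.length := by
    intro L hL
    induction L with
    | nil => simp
    | cons x L ih =>
      rw [List.prod_cons, List.length_cons, pow_succ']
      exact Set.mul_mem_mul (by simpa using hL x List.mem_cons_self)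
        (ih fun y hy => hL y (List.mem_cons_of_mem x hy))
  have hpow : ∀ d : ℕ, ((S ∪ S⁻¹) ^ d).Finite := by
    intro d
    induction d with
    | zero => simp
    | succ d ih => rw [pow_succ]; exact ih.mul (hSfin.union hSfin.inv)
  refine ((Set.finite_Iic r).biUnion fun d _ => hpow d).subset fun g hg => ?_
  obtain ⟨L, hL, hprod, hlen⟩ := exists_list_wordDist_eq hS 1 g
  rw [inv_one, one_mul] at hprod
  refine Set.mem_biUnion (x := L.length) ?_ (hprod ▸ hmem L hL)
  rw [wordBall, Set.mem_ofPred_eq, hlen] at hg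
  exact_mod_cast hg

theorem ncard_wordBall_singleton_le {b : G} (hb : Subgroup.closure {b} = ⊤) (r : ℕ) :
    (wordBall {b} r).ncard ≤ 2 * r + 1 := by
  have hpow : ∀ L : List G, (∀ x ∈ L, x ∈ ({b} : Set G) ∨ x⁻¹ ∈ ({b} : Set G)) →
      ∃ t : ℤ, |t| ≤ L.length ∧ b ^ t = L.prod := by
    intro L hL
    induction L with
    | nil => exact ⟨0, by simp⟩
    | cons x L ih =>
      obtain ⟨t, ht, hbt⟩ := ih fun y hy => hL y (List.mem_cons_of_mem x hy)
      obtain ⟨e, he, rfl⟩ : ∃ e : ℤ, |e| ≤ 1 ∧ b ^ e = x := by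
        rcases hL x List.mem_cons_self with rfl | hx
        · exact ⟨1, by simp⟩
        · exact ⟨-1, by simp, by rw [← Set.mem_singleton_iff.1 hx]; simp⟩
      refine ⟨e + t, ?_, by rw [zpow_add, hbt, List.prod_cons]⟩
      push_cast [List.length_cons]
      linarith [abs_add_le e t]
  have hsub : wordBall {b} r ⊆ (b ^ · : ℤ → G) '' Set.Icc (-r) r := by
    intro g hg
    obtain ⟨L, hL, hprod, hlen⟩ := exists_list_wordDist_eq hb 1 g
    obtain ⟨t, ht, hbt⟩ := hpow L hL
    rw [wordBall, Set.mem_ofPred_eq, hlen] at hg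
    exact ⟨t, abs_le.1 (ht.trans (by exact_mod_cast hg)), by simp [hbt, hprod]⟩
  calc (wordBall {b} r).ncard ≤ ((b ^ · : ℤ → G) '' Set.Icc (-r) r).ncard :=
        Set.ncard_le_ncard hsub ((Set.finite_Icc _ _).image _)
    _ ≤ (Set.Icc (-r : ℤ) r).ncard := Set.ncard_image_le (Set.finite_Icc _ _)
    _ = 2 * r + 1 := by
      rw [← Finset.coe_Icc, Set.ncard_coe_finset, Int.card_Icc]
      lia

theorem IsQIEmbedding.exists_ncard_wordBall_le {S : Set G} {T : Set H} (hSfin : S.Finite)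
    (hS : Subgroup.closure S = ⊤) (hTfin : T.Finite) (hT : Subgroup.closure T = ⊤) {f : G → H}
    (hf : IsQIEmbedding (wordDist S) (wordDist T) f) :
    ∃ A K C : ℕ, ∀ r : ℕ, (wordBall S r).ncard ≤ A * (wordBall T (K * r + C)).ncard := by
  classical
  obtain ⟨K, C, -, -, hupper⟩ := hf.upper
  obtain ⟨K', C', -, -, hlower⟩ := hf.lower
  refine ⟨(wordBall S ⌈C'⌉₊).ncard, ⌈K⌉₊, ⌈C⌉₊, fun r => ?_⟩
  have hfin := finite_wordBall hSfin hS
  have hfin' := finite_wordBall hTfin hT (⌈K⌉₊ * r + ⌈C⌉₊)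
  rw [Set.ncard_eq_toFinset_card _ (hfin r), Set.ncard_eq_toFinset_card _ hfin',
    Set.ncard_eq_toFinset_card _ (hfin _)]
  refine Finset.card_le_mul_card_image_of_maps_to (f := fun g => (f 1)⁻¹ * f g)
    (fun g hg => ?_) _ fun y _ => ?_
  · simp only [Set.Finite.mem_toFinset, wordBall, Set.mem_ofPred_eq] at hg ⊢
    rw [← wordDist_eq_wordDist_one]
    push_cast
    refine (hupper 1 g).trans ?_
    gcongr
    exacts [wordDist_nonneg S 1 g, Nat.le_ceil K, Nat.le_ceil C]
  · rcases Finset.eq_empty_or_nonempty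
      {g ∈ (hfin r).toFinset | (f 1)⁻¹ * f g = y} with hempty | ⟨g₀, hg₀⟩
    · simp [hempty]
    · refine Finset.card_le_card_of_injOn (g₀⁻¹ * ·) (fun g hg => ?_) (mul_right_injective _).injOn
      have hfg : f g₀ = f g := mul_left_cancel
        ((Finset.mem_filter.1 hg₀).2.trans (Finset.mem_filter.1 hg).2.symm)
      have hdist : wordDist S g₀ g ≤ K' * wordDist T (f g₀) (f g) + C' := hlower g₀ g
      rw [hfg, wordDist_self, mul_zero, zero_add, wordDist_eq_wordDist_one] at hdist
      simpa [wordBall] using hdist.trans (Nat.le_ceil C')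

theorem exists_linear_lt_two_pow (a b : ℕ) : ∃ j : ℕ, a * j + b < 2 ^ j := by
  have h : (fun j : ℕ => (a * j + b : ℝ)) =o[Filter.atTop] fun j => (2 : ℝ) ^ j := by
    refine .add (.const_mul_left ?_ _) ?_
    · simpa using isLittleO_pow_const_const_pow_of_one_lt (R := ℝ) 1 one_lt_two
    · simpa using (isLittleO_pow_const_const_pow_of_one_lt (R := ℝ) 0 one_lt_two).const_mul_left b
  obtain ⟨j, hj⟩ := (h.def (half_pos one_pos)).exists
  refine ⟨j, ?_⟩
  rw [Real.norm_of_nonneg (by positivity), Real.norm_of_nonneg (by positivity)] at hj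
  have : (a * j + b : ℝ) < 2 ^ j := by linarith [pow_pos (two_pos (α := ℝ)) j]
  exact_mod_cast this

end Growth

section BlowDown

open Filter Topology Module
open scoped NNReal

variable {E F : Type*} [NormedAddCommGroup E] [NormedSpace ℝ E] [NormedAddCommGroup F]
  [NormedSpace ℝ F]

theorem dist_add_div_smul_succ (x v : E) (M j : ℕ) :
    dist (x + (j / M : ℝ) • v) (x + ((j + 1 : ℕ) / M : ℝ) • v) = ‖v‖ / M := by
  have hsub : x + ((j + 1 : ℕ) / M : ℝ) • v - (x + (j / M : ℝ) • v) = (1 / M : ℝ) • v := by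
    push_cast
    module
  rw [dist_comm, dist_eq_norm, hsub, norm_smul, Real.norm_of_nonneg (by positivity)]
  ring

theorem exists_hasLineDerivAt_zero_of_lipschitzWith [FiniteDimensional ℝ E]
    [FiniteDimensional ℝ F] {L : E → F} {K : ℝ≥0} (hL : LipschitzWith K L)
    (hFE : finrank ℝ F < finrank ℝ E) :
    ∃ p v : E, ‖v‖ = 1 ∧ HasLineDerivAt ℝ L 0 p v := by
  borelize E
  obtain ⟨p, hp⟩ := (hL.ae_differentiableAt (μ := MeasureTheory.Measure.addHaar)).exists
  obtain ⟨v, hv, hv0⟩ := (Submodule.ne_bot_iff _).1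
    (LinearMap.ker_ne_bot_of_finrank_lt (f := (fderiv ℝ L p : E →ₗ[ℝ] F)) hFE)
  refine ⟨p, ‖v‖⁻¹ • v, norm_smul_inv_norm hv0, ?_⟩
  have hv' : fderiv ℝ L p (‖v‖⁻¹ • v) = 0 := by
    rw [map_smul, show fderiv ℝ L p v = 0 from hv, smul_zero]
  exact hv' ▸ hp.hasFDerivAt.hasLineDerivAt (‖v‖⁻¹ • v)

/-- The map `h` seen from far away: `h` recentred at `0` and rescaled by `1 / N` in both source and
target. -/
noncomputable def blowDown (h : E → F) (N : ℕ) (x : E) : F := (N : ℝ)⁻¹ • (h ((N : ℝ) • x) - h 0)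

theorem smul_blowDown_sub (h : E → F) {N : ℕ} (hN : N ≠ 0) (x y : E) :
    (N : ℝ) • (blowDown h N x - blowDown h N y) = h ((N : ℝ) • x) - h ((N : ℝ) • y) := by
  simp [blowDown, ← smul_sub, hN]

variable {h : E → F} {K : ℝ≥0} {C : ℝ} (hh : ∀ x y, dist (h x) (h y) ≤ K * dist x y + C)

include hh

theorem dist_blowDown_le {N : ℕ} (hN : N ≠ 0) (x y : E) :
    dist (blowDown h N x) (blowDown h N y) ≤ K * dist x y + C / N := by
  have hN' : (0 : ℝ) < N := by positivity
  have key := hh ((N : ℝ) • x) ((N : ℝ) • y)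
  rw [dist_eq_norm, ← smul_blowDown_sub h hN, norm_smul, dist_smul₀, Real.norm_natCast,
    ← dist_eq_norm] at key
  refine le_of_mul_le_mul_left (key.trans_eq ?_) hN'
  field_simp

variable [FiniteDimensional ℝ F]

theorem exists_lipschitzWith_tendsto_blowDown {U : Ultrafilter ℕ} (hU : (U : Filter ℕ) ≤ atTop) :
    ∃ L : E → F, LipschitzWith K L ∧ ∀ x, Tendsto (blowDown h · x) U (𝓝 (L x)) := by
  have := FiniteDimensional.proper ℝ F
  have hC : 0 ≤ C := by simpa using hh 0 0
  have hne : ∀ᶠ N in (U : Filter ℕ), N ≠ 0 := hU (eventually_ne_atTop 0)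
  have hlim : ∀ x, ∃ y, Tendsto (blowDown h · x) U (𝓝 y) := by
    intro x
    have hball : ∀ᶠ N in (U : Filter ℕ),
        blowDown h N x ∈ Metric.closedBall (0 : F) (K * ‖x‖ + C) := by
      filter_upwards [hne] with N hN
      have hzero : blowDown h N 0 = 0 := by simp [blowDown]
      have hCN : C / N ≤ C := div_le_self hC (by exact_mod_cast Nat.one_le_iff_ne_zero.2 hN)
      have hdist := dist_blowDown_le hh hN x 0
      rw [hzero, dist_zero_right x] at hdist
      exact hdist.trans (by gcongr)
    obtain ⟨y, -, hy⟩ := (isCompact_closedBall (0 : F) (K * ‖x‖ + C)).ultrafilter_le_nhds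
      (U.map (blowDown h · x)) (le_principal_iff.2 hball)
    exact ⟨y, hy⟩
  choose L hL using hlim
  refine ⟨L, LipschitzWith.of_dist_le_mul fun x y => ?_, hL⟩
  have hCN : Tendsto (fun N : ℕ => K * dist x y + C / N) U (𝓝 (K * dist x y)) := by
    simpa using (tendsto_const_div_atTop_nhds_zero_nat C).mono_left hU |>.const_add (K * dist x y)
  refine le_of_tendsto_of_tendsto ((hL x).dist (hL y)) hCN ?_
  filter_upwards [hne] with N hN using dist_blowDown_le hh hN x y

theorem exists_almost_constant_segment [FiniteDimensional ℝ E] (hFE : finrank ℝ F < finrank ℝ E)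
    {ε : ℝ} (hε : 0 < ε) (M : ℕ) (R : ℝ) :
    ∃ x v : E, R ≤ ‖v‖ ∧ ∀ j ≤ M, ‖h (x + (j / M : ℝ) • v) - h x‖ ≤ ε * ‖v‖ := by
  obtain ⟨L, hLip, hL⟩ := exists_lipschitzWith_tendsto_blowDown hh Nat.hyperfilter_le_atTop
  obtain ⟨p, v, hv, hderiv⟩ := exists_hasLineDerivAt_zero_of_lipschitzWith hLip hFE
  obtain ⟨δ, hδ, hLδ⟩ : ∃ δ > 0, ∀ t : ℝ, |t| ≤ δ → ‖L (p + t • v) - L p‖ ≤ ε / 2 * |t| := by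
    have hlittle := (hasLineDerivAt_iff_isLittleO_nhds_zero.1 hderiv).def (half_pos hε)
    simpa [Metric.closedBall, Set.subset_def] using
      (Metric.nhds_basis_closedBall.eventually_iff).1 hlittle
  let t : ℕ → ℝ := fun j => j / M * δ
  have hconst : ∀ᶠ N in (hyperfilter ℕ : Filter ℕ), ∀ j ∈ Finset.range (M + 1),
      ‖blowDown h N (p + t j • v) - blowDown h N p‖ < ε * δ := by
    refine (eventually_all_finset _).2 fun j hj => ?_
    refine ((hL _).sub (hL p)).norm.eventually_lt_const ?_
    have htj : |t j| ≤ δ := by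
      rw [abs_of_nonneg (by positivity)]
      refine mul_le_of_le_one_left hδ.le (div_le_one_of_le₀ ?_ (by positivity))
      exact_mod_cast Finset.mem_range_succ_iff.1 hj
    calc ‖L (p + t j • v) - L p‖ ≤ ε / 2 * |t j| := hLδ _ htj
      _ ≤ ε / 2 * δ := by gcongr
      _ < ε * δ := by gcongr; exact half_lt_self hε
  have hlarge : ∀ᶠ N : ℕ in (hyperfilter ℕ : Filter ℕ), R ≤ N * δ :=
    Nat.hyperfilter_le_atTop
      ((tendsto_natCast_atTop_atTop.atTop_mul_const hδ).eventually_ge_atTop R)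
  obtain ⟨N, hN, hNR, hN0⟩ := (hconst.and (hlarge.and
    (Nat.hyperfilter_le_atTop (eventually_ne_atTop 0)))).exists
  have hnorm : ‖(N * δ : ℝ) • v‖ = N * δ := by
    rw [norm_smul, hv, mul_one, Real.norm_of_nonneg (by positivity)]
  refine ⟨(N : ℝ) • p, (N * δ : ℝ) • v, hNR.trans_eq hnorm.symm, fun j hj => ?_⟩
  have hpoint : (N : ℝ) • p + (j / M : ℝ) • (N * δ : ℝ) • v = (N : ℝ) • (p + t j • v) := by
    module
  rw [hpoint, ← smul_blowDown_sub h hN0, norm_smul, hnorm, Real.norm_natCast, mul_left_comm]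
  gcongr
  exact (hN j (Finset.mem_range_succ_iff.2 hj)).le

end BlowDown

namespace GammaGroup

variable {k : ℕ} (n : Fin k → ℕ)

theorem semiconjBy_gammaA (i : Fin k) : SemiconjBy (gammaA n i) (gammaB n ^ n i) (gammaB n) := by
  have h : (gammaA n i)⁻¹ * gammaB n * gammaA n i * (gammaB n ^ n i)⁻¹ = 1 :=
    PresentedGroup.one_of_mem (rels := gammaRels n) (Or.inl ⟨i, rfl⟩)
  rw [SemiconjBy, ← mul_inv_eq_one.1 h]
  group

theorem semiconjBy_gammaA_pow (i : Fin k) (r : ℕ) :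
    SemiconjBy (gammaA n i ^ r) (gammaB n ^ n i ^ r) (gammaB n) := by
  induction r with
  | zero => simp
  | succ r ih =>
    rw [pow_succ', pow_succ, pow_mul]
    exact (semiconjBy_gammaA n i).mul_left (ih.pow_right (n i))

theorem commute_gammaA (i j : Fin k) : Commute (gammaA n i) (gammaA n j) := by
  rcases eq_or_ne i j with rfl | hij
  · exact Commute.refl _
  · have h : gammaA n i * gammaA n j * (gammaA n i)⁻¹ * (gammaA n j)⁻¹ = 1 :=
      PresentedGroup.one_of_mem (rels := gammaRels n) (Or.inr ⟨i, j, hij, rfl⟩)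
    rwa [mul_inv_eq_one, mul_inv_eq_iff_eq_mul] at h

section Lift

variable {n} {H : Type*} [Group H]

/-- The homomorphism out of `Γ(n)` given by the images `a i` and `b` of the generators. -/
def lift (a : Fin k → H) (b : H) (hb : ∀ i, SemiconjBy (a i) (b ^ n i) b)
    (ha : ∀ i j, Commute (a i) (a j)) : GammaGroup n →* H :=
  PresentedGroup.toGroup (rels := gammaRels n) (f := Sum.elim a fun _ => b) <| by
    rintro r (⟨i, rfl⟩ | ⟨i, j, -, rfl⟩)
    · have h : (a i)⁻¹ * b * a i = b ^ n i := by rw [mul_assoc, ← (hb i).eq, inv_mul_cancel_left]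
      simp [h]
    · simp [(ha i j).eq]

variable {a : Fin k → H} {b : H} (hb : ∀ i, SemiconjBy (a i) (b ^ n i) b)
  (ha : ∀ i j, Commute (a i) (a j))

@[simp] theorem lift_gammaA (i : Fin k) : lift a b hb ha (gammaA n i) = a i :=
  PresentedGroup.toGroup.of _

@[simp] theorem lift_gammaB : lift a b hb ha (gammaB n) = b :=
  PresentedGroup.toGroup.of _

end Lift

/-- The generating set `{a₁, …, a_k, b}` of `Γ(n)`. -/
def stdGens : Set (GammaGroup n) := insert (gammaB n) (Set.range (gammaA n))

theorem gammaA_mem_stdGens (i : Fin k) : gammaA n i ∈ stdGens n := Or.inr ⟨i, rfl⟩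

theorem gammaB_mem_stdGens : gammaB n ∈ stdGens n := Or.inl rfl

theorem finite_stdGens : (stdGens n).Finite := (Set.finite_range _).insert _

theorem closure_stdGens : Subgroup.closure (stdGens n) = ⊤ := by
  rw [eq_top_iff, ← show Subgroup.closure (Set.range _) = (⊤ : Subgroup (GammaGroup n)) from
    PresentedGroup.closure_range_of (gammaRels n)]
  refine Subgroup.closure_mono ?_
  rintro _ ⟨i | _, rfl⟩
  exacts [gammaA_mem_stdGens n i, gammaB_mem_stdGens n]

theorem injective_gammaB_zpow (hn : ∀ i, n i ≠ 0) :
    Function.Injective fun r : ℤ => gammaB n ^ r := by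
  -- `Γ(n)` acts on `ℚ` with `b` the translation by `1` and `a i` the division by `n i`.
  let φ : GammaGroup n →* ℚ ≃ᵃ[ℚ] ℚ :=
    lift (fun i => AffineEquiv.homothetyUnitsMulHom 0 (Units.mk0 (n i : ℚ)⁻¹ (by simp [hn i])))
      (AffineEquiv.constVAdd ℚ ℚ 1)
      (fun i => by
        rw [← AffineEquiv.constVAdd_nsmul]
        ext x
        simp [AffineMap.homothety_apply, mul_add, hn i])
      (fun i j => (Commute.all _ _).map (AffineEquiv.homothetyUnitsMulHom (0 : ℚ)))
  intro r s hrs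
  have key : φ (gammaB n ^ r) 0 = φ (gammaB n ^ s) 0 := congrArg (φ · 0) hrs
  simpa [φ, ← AffineEquiv.constVAdd_zsmul] using key

section Height

variable {n}

/-- The homomorphism `Γ(n) → ℤᵏ` sending `a i` to the `i`-th basis vector and `b` to `0`. -/
def heightHom : GammaGroup n →* Multiplicative (Fin k → ℤ) :=
  lift (fun i => Multiplicative.ofAdd (Pi.single i 1)) 1 (fun i => by simp)
    fun _ _ => Commute.all _ _

/-- The vector of exponent sums of `a₁, …, a_k` in an element of `Γ(n)`. -/
def height (g : GammaGroup n) : Fin k → ℤ := (heightHom g).toAdd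

theorem height_gammaA (i : Fin k) : height (gammaA n i) = Pi.single i 1 := by
  simp [height, heightHom]

theorem height_gammaB : height (gammaB n) = 0 := by simp [height, heightHom]

theorem height_one : height (1 : GammaGroup n) = 0 := by simp [height]

theorem height_mul (g h : GammaGroup n) : height (g * h) = height g + height h := by simp [height]

theorem height_inv (g : GammaGroup n) : height g⁻¹ = -height g := by simp [height]

theorem height_zpow (g : GammaGroup n) (r : ℤ) : height (g ^ r) = r • height g := by simp [height]

theorem height_inv_mul (g h : GammaGroup n) : height (g⁻¹ * h) = height h - height g := by
  rw [height_mul, height_inv, neg_add_eq_sub]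

theorem norm_height_le_one {x : GammaGroup n} (hx : x ∈ stdGens n ∨ x⁻¹ ∈ stdGens n) :
    ‖height x‖ ≤ 1 := by
  have hgen : ∀ y ∈ stdGens n, ‖height y‖ ≤ 1 := by
    rintro y (rfl | ⟨i, rfl⟩)
    · simp [height_gammaB]
    · simp [height_gammaA, Pi.norm_single]
  rcases hx with hx | hx
  · exact hgen x hx
  · simpa [height_inv] using hgen x⁻¹ hx

theorem dist_height_le (g h : GammaGroup n) :
    dist (height g) (height h) ≤ wordDist (stdGens n) g h := by
  rw [dist_comm, dist_eq_norm, ← height_inv_mul]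
  simpa using le_mul_wordDist (closure_stdGens n) (φ := fun g => ‖height g‖) (c := 1)
    (by simp [height_one]) (fun x y => height_mul x y ▸ norm_add_le _ _)
    (fun x hx => norm_height_le_one hx) g h

end Height

/-- The homomorphism `z ↦ a₁ ^ z₁ ⋯ a_k ^ z_k` from `ℤᵏ` to `Γ(n)`. -/
def aPowHom : (Fin k → Multiplicative ℤ) →* GammaGroup n :=
  MonoidHom.noncommPiCoprod (fun i => zpowersHom _ (gammaA n i)) fun i j _ x y => by
    simpa only [zpowersHom_apply] using (commute_gammaA n i j).zpow_zpow _ _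

/-- The element `a₁ ^ z₁ ⋯ a_k ^ z_k` of `Γ(n)`. -/
def aPow (z : Fin k → ℤ) : GammaGroup n := aPowHom n fun i => .ofAdd (z i)

theorem aPow_zero : aPow n 0 = 1 := map_one (aPowHom n)

theorem aPow_add (z w : Fin k → ℤ) : aPow n (z + w) = aPow n z * aPow n w :=
  map_mul (aPowHom n) _ _

theorem aPow_neg (z : Fin k → ℤ) : aPow n (-z) = (aPow n z)⁻¹ := map_inv (aPowHom n) _

theorem aPow_single (i : Fin k) (r : ℤ) : aPow n (Pi.single i r) = gammaA n i ^ r := by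
  have hsingle : (fun j => .ofAdd ((Pi.single i r : Fin k → ℤ) j)) =
      (Pi.mulSingle i (.ofAdd r) : Fin k → Multiplicative ℤ) :=
    rfl
  rw [aPow, hsingle]
  exact (MonoidHom.noncommPiCoprod_mulSingle _ _ _).trans (zpowersHom_apply _ _ _)

theorem height_aPow (z : Fin k → ℤ) : height (aPow n z) = z := by
  induction z using Pi.single_induction with
  | zero => rw [aPow_zero, height_one]
  | add z w hz hw => rw [aPow_add, height_mul, hz, hw]
  | single i r => rw [aPow_single, height_zpow, height_gammaA, ← Pi.single_smul]; simp

theorem semiconjBy_aPow (v : Fin k → ℕ) :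
    SemiconjBy (aPow n fun i => v i) (gammaB n ^ ∏ i, n i ^ v i) (gammaB n) := by
  induction v using Pi.single_induction with
  | zero => simpa using! aPow_zero n ▸ SemiconjBy.one_left (gammaB n)
  | add v w hv hw =>
    have hadd : (aPow n fun i => ((v + w) i : ℕ)) =
        (aPow n fun i => (v i : ℤ)) * aPow n fun i => (w i : ℤ) := by
      rw [← aPow_add]
      congr
    simp only [Pi.add_apply, pow_add, Finset.prod_mul_distrib] at hadd ⊢
    rw [hadd, mul_comm, pow_mul]
    exact hv.mul_left (hw.pow_right _)
  | single i r =>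
    have hsingle : (aPow n fun j => ((Pi.single i r : Fin k → ℕ) j : ℕ)) = gammaA n i ^ r := by
      rw [← zpow_natCast, ← aPow_single]
      congr
      ext j
      exact Pi.apply_single (fun _ (x : ℕ) => (x : ℤ)) (fun _ => rfl) i r j
    have hprod : ∏ j, n j ^ (Pi.single i r : Fin k → ℕ) j = n i ^ r := by
      rw [Finset.prod_eq_single i (by simp +contextual) (by simp), Pi.single_eq_same]
    rw [hsingle, hprod]
    exact semiconjBy_gammaA_pow n i r

theorem wordDist_one_aPow_le (z : Fin k → ℤ) : wordDist (stdGens n) 1 (aPow n z) ≤ k * ‖z‖ := by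
  have hsingle : ∀ i, wordDist (stdGens n) 1 (aPow n (Pi.single i (z i))) ≤ ‖z‖ := by
    intro i
    rw [aPow_single, wordDist_one_zpow_eq (closure_stdGens n)]
    refine (wordDist_one_pow_le (closure_stdGens n) (gammaA_mem_stdGens n i) _).trans ?_
    rw [Nat.cast_natAbs, Int.cast_abs, ← Int.norm_eq_abs]
    exact norm_le_pi_norm z i
  calc wordDist (stdGens n) 1 (aPow n z)
      = wordDist (stdGens n) 1 (aPow n (∑ i, Pi.single i (z i))) := by rw [Finset.univ_sum_single]
    _ ≤ ∑ i, wordDist (stdGens n) 1 (aPow n (Pi.single i (z i))) :=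
      Finset.le_sum_of_subadditive (fun z => wordDist (stdGens n) 1 (aPow n z))
        (by simp [aPow_zero, wordDist_self])
        (fun z w => aPow_add n z w ▸ wordDist_one_mul_le (closure_stdGens n) _ _) _ _
    _ ≤ ∑ _i : Fin k, ‖z‖ := Finset.sum_le_sum fun i _ => hsingle i
    _ = k * ‖z‖ := by simp

-- Euclidean division by `n i` writes `b ^ M = a i⁻¹ * b ^ (M / n i) * a i * b ^ (M % n i)`, so each
-- halving of `M` costs a bounded length.
theorem wordDist_one_gammaB_pow_le {i : Fin k} (hi : 2 ≤ n i) {M j : ℕ} (hM : M < 2 ^ j) :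
    wordDist (stdGens n) 1 (gammaB n ^ M) ≤ j * (n i + 1) := by
  have hS := closure_stdGens n
  induction j generalizing M with
  | zero => simp [show M = 0 by simpa using hM, wordDist_self]
  | succ j ih =>
    have hdiv : M / n i < 2 ^ j := by
      refine (Nat.div_le_div_left hi two_pos).trans_lt (Nat.div_lt_of_lt_mul ?_)
      rwa [← pow_succ']
    have hpow : gammaB n ^ M =
        (gammaA n i)⁻¹ * (gammaB n ^ (M / n i) * (gammaA n i * gammaB n ^ (M % n i))) := by
      have hconj := ((semiconjBy_gammaA n i).pow_right (M / n i)).eq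
      rw [← mul_assoc (gammaB n ^ (M / n i)), ← hconj, mul_assoc, inv_mul_cancel_left, ← pow_mul,
        ← pow_add, Nat.div_add_mod]
    have hmod : wordDist (stdGens n) 1 (gammaB n ^ (M % n i)) ≤ n i - 1 := by
      refine (wordDist_one_pow_le hS (gammaB_mem_stdGens n) _).trans ?_
      rw [le_sub_iff_add_le]
      exact_mod_cast Nat.mod_lt M (by lia)
    have ha := wordDist_one_le_one (gammaA_mem_stdGens n i)
    rw [hpow]
    push_cast
    linarith [ih hdiv, wordDist_one_inv hS (gammaA n i),
      wordDist_one_mul_le hS (gammaA n i)⁻¹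
        (gammaB n ^ (M / n i) * (gammaA n i * gammaB n ^ (M % n i))),
      wordDist_one_mul_le hS (gammaB n ^ (M / n i)) (gammaA n i * gammaB n ^ (M % n i)),
      wordDist_one_mul_le hS (gammaA n i) (gammaB n ^ (M % n i))]

section NormalForm

variable {n}

/-- `g = a^T * b^M * a^(height g - T)` with `|M| ≤ Q`, where `a^T` abbreviates
`a₁ ^ T ⋯ a_k ^ T`. -/
def HasNormalForm (T Q : ℕ) (g : GammaGroup n) : Prop :=
  ∃ M : ℤ, M.natAbs ≤ Q ∧ g = aPow n T * gammaB n ^ M * aPow n (height g - T)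

theorem hasNormalForm_one (T : ℕ) : HasNormalForm T 0 (1 : GammaGroup n) :=
  ⟨0, le_rfl, by simp [height_one, aPow_neg]⟩

namespace HasNormalForm

variable {T Q : ℕ} {g : GammaGroup n}

theorem mono {Q' : ℕ} (hg : HasNormalForm T Q g) (hQ : Q ≤ Q') : HasNormalForm T Q' g :=
  let ⟨M, hM, h⟩ := hg
  ⟨M, hM.trans hQ, h⟩

theorem mul_aPow (hg : HasNormalForm T Q g) (z : Fin k → ℤ) :
    HasNormalForm T Q (g * aPow n z) := by
  obtain ⟨M, hM, h⟩ := hg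
  refine ⟨M, hM, ?_⟩
  rw [height_mul, height_aPow, add_sub_right_comm, aPow_add, ← mul_assoc, ← h]

-- Moving `b` to the left past `aPow n (height g - T)` replaces it by a power with nonnegative
-- exponents `n i ^ (T - height g i)`.
theorem mul_gammaB_zpow (hg : HasNormalForm T Q g) (hT : ‖height g‖ ≤ T) (e : ℤ) :
    HasNormalForm T (Q + e.natAbs * (∏ i, (n i + 1)) ^ (2 * T)) (g * gammaB n ^ e) := by
  obtain ⟨M, hM, h⟩ := hg
  have habs : ∀ i, |height g i| ≤ T := fun i => by
    exact_mod_cast (Int.norm_eq_abs _ ▸ norm_le_pi_norm (height g) i).trans hT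
  obtain ⟨v, hv⟩ : ∃ v : Fin k → ℕ, ∀ i, (v i : ℤ) = T - height g i :=
    ⟨fun i => (T - height g i).toNat, fun i =>
      Int.toNat_of_nonneg (sub_nonneg.2 ((le_abs_self _).trans (habs i)))⟩
  have hvT : ∀ i, v i ≤ 2 * T := fun i => by
    have := neg_le_of_abs_le (habs i)
    have := hv i
    lia
  have hconj : SemiconjBy (aPow n (height g - T)) (gammaB n ^ e)
      (gammaB n ^ ((∏ i, n i ^ v i : ℕ) * e)) := by
    have hneg : aPow n (height g - T) = (aPow n fun i => v i)⁻¹ := by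
      rw [← aPow_neg]
      congr
      ext i
      simp [hv]
    rw [hneg, zpow_mul, zpow_natCast]
    exact (semiconjBy_aPow n v).inv_symm_left.zpow_right e
  refine ⟨M + (∏ i, n i ^ v i : ℕ) * e, ?_, ?_⟩
  · have hprod : ∏ i, n i ^ v i ≤ (∏ i, (n i + 1)) ^ (2 * T) := by
      rw [← Finset.prod_pow]
      exact Finset.prod_le_prod' fun i _ =>
        (Nat.pow_le_pow_left (n i).le_succ _).trans (Nat.pow_le_pow_right (n i).succ_pos (hvT i))
    calc (M + (∏ i, n i ^ v i : ℕ) * e).natAbs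
        ≤ M.natAbs + e.natAbs * ∏ i, n i ^ v i := by
          refine (Int.natAbs_add_le _ _).trans_eq ?_
          rw [Int.natAbs_mul, Int.natAbs_natCast, mul_comm]
      _ ≤ Q + e.natAbs * (∏ i, (n i + 1)) ^ (2 * T) := by gcongr
  · have hheight : height (g * gammaB n ^ e) = height g := by
      simp [height_mul, height_zpow, height_gammaB]
    rw [hheight]
    nth_rewrite 1 [h]
    rw [mul_assoc _ (aPow n (height g - T)), hconj.eq, zpow_add]
    simp only [mul_assoc]

theorem mul_generator (hg : HasNormalForm T Q g) (hT : ‖height g‖ ≤ T) {x : GammaGroup n}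
    (hx : x ∈ stdGens n ∨ x⁻¹ ∈ stdGens n) :
    HasNormalForm T (Q + (∏ i, (n i + 1)) ^ (2 * T)) (g * x) := by
  have hA : ∀ (i : Fin k) (e : ℤ),
      HasNormalForm T (Q + (∏ i, (n i + 1)) ^ (2 * T)) (g * gammaA n i ^ e) := fun i e =>
    aPow_single n i e ▸ (hg.mul_aPow _).mono (Nat.le_add_right _ _)
  rcases hx with (rfl | ⟨i, rfl⟩) | (hx | ⟨i, hx⟩)
  · simpa using hg.mul_gammaB_zpow hT 1
  · simpa using hA i 1
  · simpa [← hx] using hg.mul_gammaB_zpow hT (-1)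
  · simpa [hx] using hA i (-1)

theorem mul_list {L : List (GammaGroup n)} (hL : ∀ x ∈ L, x ∈ stdGens n ∨ x⁻¹ ∈ stdGens n)
    (hg : HasNormalForm T Q g) (hT : ‖height g‖ + L.length ≤ T) :
    HasNormalForm T (Q + L.length * (∏ i, (n i + 1)) ^ (2 * T)) (g * L.prod) := by
  induction L generalizing g Q with
  | nil => simpa using hg
  | cons x L ih =>
    have hx := hL x List.mem_cons_self
    simp only [List.length_cons, Nat.cast_add, Nat.cast_one] at hT
    have hheight : ‖height (g * x)‖ ≤ ‖height g‖ + 1 := by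
      rw [height_mul]
      exact norm_add_le_of_le le_rfl (norm_height_le_one hx)
    have hgx := hg.mul_generator (by linarith [L.length.cast_nonneg (α := ℝ)]) hx
    have key := ih (fun y hy => hL y (List.mem_cons_of_mem x hy)) hgx (by linarith)
    rw [List.prod_cons, List.length_cons, ← mul_assoc, add_one_mul]
    exact key.mono (by lia)

theorem wordDist_one_le (hg : HasNormalForm T Q g) {i : Fin k} (hi : 2 ≤ n i) {j : ℕ}
    (hQ : Q < 2 ^ j) :
    wordDist (stdGens n) 1 g ≤ k * T + j * (n i + 1) + k * (‖height g‖ + T) := by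
  obtain ⟨M, hM, h⟩ := hg
  have hS := closure_stdGens n
  have hT : ‖((T : ℕ) : Fin k → ℤ)‖ ≤ T :=
    (pi_norm_le_iff_of_nonneg T.cast_nonneg).2 fun i => by simp
  have hleft : wordDist (stdGens n) 1 (aPow n T) ≤ k * T :=
    (wordDist_one_aPow_le n _).trans (by gcongr)
  have hmid : wordDist (stdGens n) 1 (gammaB n ^ M) ≤ j * (n i + 1) := by
    rw [wordDist_one_zpow_eq hS]
    exact wordDist_one_gammaB_pow_le n hi (hM.trans_lt hQ)
  have hright : wordDist (stdGens n) 1 (aPow n (height g - T)) ≤ k * (‖height g‖ + T) :=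
    (wordDist_one_aPow_le n _).trans (by gcongr; exact norm_sub_le_of_le le_rfl hT)
  calc wordDist (stdGens n) 1 g
      = wordDist (stdGens n) 1 (aPow n T * gammaB n ^ M * aPow n (height g - T)) := by rw [← h]
    _ ≤ _ := (wordDist_one_mul_le hS _ _).trans
      (add_le_add ((wordDist_one_mul_le hS _ _).trans (add_le_add hleft hmid)) hright)

end HasNormalForm

theorem hasNormalForm_path {N H D : ℕ} {g : ℕ → GammaGroup n} (hg : g 0 = 1)
    (hD : ∀ j < N, wordDist (stdGens n) (g j) (g (j + 1)) ≤ D)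
    (hH : ∀ j < N, ‖height (g j)‖ ≤ H) :
    HasNormalForm (H + D) (N * D * (∏ i, (n i + 1)) ^ (2 * (H + D))) (g N) := by
  induction N with
  | zero => simpa [hg] using hasNormalForm_one (H + D)
  | succ N ih =>
    have ih := ih (fun j hj => hD j (hj.trans N.lt_succ_self))
      fun j hj => hH j (hj.trans N.lt_succ_self)
    obtain ⟨L, hL, hprod, hlen⟩ := exists_list_wordDist_eq (closure_stdGens n) (g N) (g (N + 1))
    have hLD : L.length ≤ D := by exact_mod_cast hlen ▸ hD N N.lt_succ_self
    have key := ih.mul_list hL (by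
      push_cast
      exact add_le_add (hH N N.lt_succ_self) (by exact_mod_cast hLD))
    rw [hprod, mul_inv_cancel_left] at key
    refine key.mono ?_
    rw [add_one_mul, add_mul]
    gcongr

-- The path has at most `N * D` letters, so the exponent `M` of its normal form is at most
-- exponential in `N + H + D`, while `b ^ M` has length of order `log M`.
theorem exists_wordDist_path_le {i : Fin k} (hi : 2 ≤ n i) :
    ∃ c > 0, ∀ (N H D : ℕ) (g : ℕ → GammaGroup n),
      (∀ j < N, wordDist (stdGens n) (g j) (g (j + 1)) ≤ D) →
      (∀ j ≤ N, dist (height (g j)) (height (g 0)) ≤ H) →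
      wordDist (stdGens n) (g 0) (g N) ≤ c * (N + H + D) := by
  set P := ∏ i, (n i + 1)
  refine ⟨3 * k + (2 * P + 1) * (n i + 1 : ℝ), by positivity, fun N H D g hD hH => ?_⟩
  have hheight : ∀ j ≤ N, ‖height ((g 0)⁻¹ * g j)‖ ≤ H := fun j hj => by
    rw [height_inv_mul, ← dist_eq_norm]
    exact hH j hj
  have hnf : HasNormalForm (H + D) (N * D * P ^ (2 * (H + D))) ((g 0)⁻¹ * g N) :=
    hasNormalForm_path (g := fun j => (g 0)⁻¹ * g j) (inv_mul_cancel _)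
      (fun j hj => by rw [wordDist_mul_left]; exact hD j hj) fun j hj => hheight j hj.le
  have hlt : N * D * P ^ (2 * (H + D)) < 2 ^ (N + D + P * (2 * (H + D))) := by
    rw [pow_add, pow_add, pow_mul 2 P]
    exact Nat.mul_lt_mul_of_lt_of_le (Nat.mul_lt_mul'' Nat.lt_two_pow_self Nat.lt_two_pow_self)
      (Nat.pow_le_pow_left Nat.lt_two_pow_self.le _) (by positivity)
  have key := hnf.wordDist_one_le hi hlt
  rw [wordDist_eq_wordDist_one]
  push_cast at key
  calc wordDist (stdGens n) 1 ((g 0)⁻¹ * g N)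
      ≤ k * (H + D) + (N + D + P * (2 * (H + D))) * (n i + 1) + k * (H + (H + D)) := by
        refine key.trans ?_
        gcongr
        exact hheight N le_rfl
    _ ≤ k * (3 * (N + H + D)) + ((2 * P + 1) * (N + H + D)) * (n i + 1) := by
      have hk : (0 : ℝ) ≤ k * (3 * N + D) := by positivity
      have hP : (0 : ℝ) ≤ (2 * P * N + H) * (n i + 1) := by positivity
      linarith
    _ = _ := by ring

end NormalForm

section Rank

open Module
open scoped NNReal

variable {n} {E : Type*} [NormedAddCommGroup E] [NormedSpace ℝ E] [FiniteDimensional ℝ E]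
  {f : E → GammaGroup n}

theorem isometry_intCast_pi (ι : Type*) [Fintype ι] :
    Isometry fun (z : ι → ℤ) (i : ι) => (z i : ℝ) :=
  Isometry.piMap (fun _ (r : ℤ) => (r : ℝ)) fun _ => Isometry.of_dist_eq Int.dist_cast_real

theorem exists_almost_horizontal_segment (hE : k < finrank ℝ E)
    (hf : CoarselyLE (fun x y => wordDist (stdGens n) (f x) (f y)) dist) {ε : ℝ} (hε : 0 < ε)
    (M : ℕ) (R : ℝ) :
    ∃ x v : E, R ≤ ‖v‖ ∧
      ∀ j ≤ M, dist (height (f (x + (j / M : ℝ) • v))) (height (f x)) ≤ ε * ‖v‖ := by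
  obtain ⟨K, C, hK, -, hf⟩ := hf
  lift K to ℝ≥0 using zero_le_one.trans hK
  have hcast := isometry_intCast_pi (Fin k)
  have hh : ∀ x y, dist (fun i => (height (f x) i : ℝ)) (fun i => (height (f y) i : ℝ)) ≤
      K * dist x y + C :=
    fun x y => (hcast.dist_eq _ _).trans_le ((dist_height_le _ _).trans (hf x y))
  obtain ⟨x, v, hv, hseg⟩ := exists_almost_constant_segment hh (by simpa using hE) hε M R
  exact ⟨x, v, hv, fun j hj => by
    simpa only [← dist_eq_norm, hcast.dist_eq] using hseg j hj⟩

theorem finrank_le_of_isQIEmbedding {i : Fin k} (hi : 2 ≤ n i)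
    (hf : IsQIEmbedding dist (wordDist (stdGens n)) f) : finrank ℝ E ≤ k := by
  by_contra! hE
  obtain ⟨c, hc, hpath⟩ := exists_wordDist_path_le hi
  obtain ⟨K, C, hK, hC, hupper⟩ := hf.upper
  obtain ⟨K', C', hK', -, hlower⟩ := hf.lower
  obtain ⟨M, hM⟩ := exists_nat_gt (4 * (K' * c) * K)
  have hM0 : (0 : ℝ) < M := hM.trans' (by positivity)
  let B := K' * (c * (M + C + 2)) + C'
  obtain ⟨x, v, hv, hseg⟩ := exists_almost_horizontal_segment hE hf.upper
    (ε := 1 / (4 * (K' * c))) (by positivity) M (2 * B + 1)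
  let p : ℕ → E := fun j => x + (j / M : ℝ) • v
  have hp0 : p 0 = x := by simp [p]
  have hends : ‖v‖ = dist (p 0) (p M) := by
    rw [hp0, dist_comm, dist_eq_norm]
    simp [p, hM0.ne']
  have hlen : wordDist (stdGens n) (f (p 0)) (f (p M)) ≤
      c * (M + ⌈1 / (4 * (K' * c)) * ‖v‖⌉₊ + ⌈K * (‖v‖ / M) + C⌉₊) := by
    refine hpath M _ _ (f ∘ p) (fun j _ => ?_) fun j hj => ?_
    · exact ((hupper _ _).trans_eq (by rw [dist_add_div_smul_succ])).trans (Nat.le_ceil _)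
    · rw [Function.comp_apply, Function.comp_apply, hp0]
      exact (hseg j hj).trans (Nat.le_ceil _)
  have hKM : K' * c * (K * (‖v‖ / M)) ≤ ‖v‖ / 4 := by
    calc K' * c * (K * (‖v‖ / M)) = 4 * (K' * c) * K * (‖v‖ / (4 * M)) := by field_simp
      _ ≤ M * (‖v‖ / (4 * M)) := by gcongr
      _ = ‖v‖ / 4 := by field_simp
  have hv' : ‖v‖ ≤ B + ‖v‖ / 2 :=
    calc ‖v‖ ≤ K' * wordDist (stdGens n) (f (p 0)) (f (p M)) + C' := hends ▸ hlower (p 0) (p M)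
      _ ≤ K' * (c * (M + (1 / (4 * (K' * c)) * ‖v‖ + 1) + (K * (‖v‖ / M) + C + 1))) + C' := by
        refine add_le_add_left (mul_le_mul_of_nonneg_left (hlen.trans ?_) (by positivity)) C'
        gcongr <;> exact (Nat.ceil_lt_add_one (by positivity)).le
      _ = B + ‖v‖ / 4 + K' * c * (K * (‖v‖ / M)) := by
        simp only [B]
        field_simp
        ring
      _ ≤ B + ‖v‖ / 2 := by linarith
  linarith

theorem isQIEmbedding_floor (ι : Type*) [Fintype ι] :
    IsQIEmbedding (dist : (ι → ℝ) → (ι → ℝ) → ℝ) dist fun x i => ⌊x i⌋ := by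
  have hfloor : ∀ x : ι → ℝ, dist (fun i => (⌊x i⌋ : ℝ)) x ≤ 1 := fun x =>
    (dist_pi_le_iff zero_le_one).2 fun i => by
      rw [dist_comm, Real.dist_eq, ← Int.fract, Int.abs_fract]
      exact (Int.fract_lt_one _).le
  have hcast : ∀ x y : ι → ℝ, dist (fun i => ⌊x i⌋) (fun i => ⌊y i⌋) =
      dist (fun i => (⌊x i⌋ : ℝ)) fun i => (⌊y i⌋ : ℝ) := fun x y =>
    ((isometry_intCast_pi ι).dist_eq _ _).symm
  refine ⟨⟨1, 2, le_rfl, zero_le_two, fun x y => ?_⟩, ⟨1, 2, le_rfl, zero_le_two, fun x y => ?_⟩⟩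
  · beta_reduce
    rw [hcast]
    linarith [dist_triangle4 (fun i => (⌊x i⌋ : ℝ)) x y fun i => (⌊y i⌋ : ℝ), hfloor x, hfloor y,
      dist_comm y fun i => (⌊y i⌋ : ℝ)]
  · beta_reduce
    rw [hcast]
    linarith [dist_triangle4 x (fun i => (⌊x i⌋ : ℝ)) (fun i => (⌊y i⌋ : ℝ)) y, hfloor x, hfloor y,
      dist_comm x fun i => (⌊x i⌋ : ℝ)]

theorem isQIEmbedding_aPow (n : Fin k → ℕ) :
    IsQIEmbedding dist (wordDist (stdGens n)) (aPow n) where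
  upper := ⟨k + 1, 0, by simp, le_rfl, fun z w => by
    beta_reduce
    rw [wordDist_eq_wordDist_one, ← aPow_neg, ← aPow_add, neg_add_eq_sub, add_zero, dist_comm,
      dist_eq_norm]
    exact (wordDist_one_aPow_le n _).trans (by gcongr; simp)⟩
  lower := ⟨1, 0, le_rfl, le_rfl, fun z w => by
    simpa [height_aPow] using dist_height_le (aPow n z) (aPow n w)⟩

end Rank

section Growth

variable {n}

theorem two_pow_le_ncard_wordBall (hn : ∀ i, n i ≠ 0) {i : Fin k} (hi : 2 ≤ n i) (j : ℕ) :
    2 ^ j ≤ (wordBall (stdGens n) (j * (n i + 1))).ncard := by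
  have hsub : (fun M : ℕ => gammaB n ^ M) '' Set.Iio (2 ^ j) ⊆
      wordBall (stdGens n) (j * (n i + 1)) := by
    rintro _ ⟨M, hM, rfl⟩
    exact (wordDist_one_gammaB_pow_le n hi hM).trans_eq (by push_cast; rfl)
  have hinj : Function.Injective fun M : ℕ => gammaB n ^ M := fun M M' h =>
    Nat.cast_injective (injective_gammaB_zpow n hn (by simpa using h))
  calc 2 ^ j = (Set.Iio (2 ^ j)).ncard := by simp [← Finset.coe_Iio, Set.ncard_coe_finset]
    _ = ((fun M : ℕ => gammaB n ^ M) '' Set.Iio (2 ^ j)).ncard :=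
      (Set.ncard_image_of_injective _ hinj).symm
    _ ≤ _ := Set.ncard_le_ncard hsub (finite_wordBall (finite_stdGens n) (closure_stdGens n) _)

theorem not_isQIEmbedding_of_isEmpty {l : ℕ} {m : Fin l → ℕ} (hm : ∀ j, m j ≠ 0) {j : Fin l}
    (hj : 2 ≤ m j) [IsEmpty (Fin k)] (f : GammaGroup m → GammaGroup n) :
    ¬ IsQIEmbedding (wordDist (stdGens m)) (wordDist (stdGens n)) f := by
  intro hf
  have hgens : stdGens n = {gammaB n} := by simp [stdGens, Set.range_eq_empty]
  obtain ⟨A, K, C, hgrowth⟩ := hf.exists_ncard_wordBall_le (finite_stdGens m) (closure_stdGens m)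
    (finite_stdGens n) (closure_stdGens n)
  obtain ⟨r, hr⟩ := exists_linear_lt_two_pow (A * 2 * K * (m j + 1)) (A * (2 * C + 1))
  have hball := ncard_wordBall_singleton_le (hgens ▸ closure_stdGens n) (K * (r * (m j + 1)) + C)
  refine hr.not_ge ?_
  calc 2 ^ r ≤ (wordBall (stdGens m) (r * (m j + 1))).ncard := two_pow_le_ncard_wordBall hm hj r
    _ ≤ A * (wordBall (stdGens n) (K * (r * (m j + 1)) + C)).ncard := hgrowth _
    _ ≤ A * (2 * (K * (r * (m j + 1)) + C) + 1) := by rw [hgens]; gcongr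
    _ = A * 2 * K * (m j + 1) * r + A * (2 * C + 1) := by ring

end Growth

variable {n} {l : ℕ} {m : Fin l → ℕ}

theorem le_of_isQIEmbedding (hn : k ≠ 0 → ∃ i, 2 ≤ n i) (hm : ∀ j, m j ≠ 0)
    (hm' : l ≠ 0 → ∃ j, 2 ≤ m j) {f : GammaGroup m → GammaGroup n}
    (hf : IsQIEmbedding (wordDist (stdGens m)) (wordDist (stdGens n)) f) : l ≤ k := by
  rcases eq_or_ne k 0 with rfl | hk
  · by_contra! hl
    obtain ⟨j, hj⟩ := hm' hl.ne'
    exact not_isQIEmbedding_of_isEmpty hm hj f hf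
  · obtain ⟨i, hi⟩ := hn hk
    simpa using finrank_le_of_isQIEmbedding hi
      (hf.comp ((isQIEmbedding_aPow m).comp (isQIEmbedding_floor (Fin l))))

theorem exists_isQIEmbedding_stdGens (h : QuasiIsometricGroups (GammaGroup n) (GammaGroup m)) :
    (∃ f, IsQIEmbedding (wordDist (stdGens n)) (wordDist (stdGens m)) f) ∧
      ∃ f, IsQIEmbedding (wordDist (stdGens m)) (wordDist (stdGens n)) f := by
  obtain ⟨S, T, hS, hT, K, C, f, hK, hC, hf⟩ := h
  obtain ⟨g, hg⟩ := hf.exists_isQIEmbedding_symm hK hC (wordDist_comm hT) (wordDist_triangle hT)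
  have hn := finite_stdGens n
  have hm := finite_stdGens m
  have hn' := closure_stdGens n
  have hm' := closure_stdGens m
  exact ⟨⟨_, (isQIEmbedding_id_wordDist hT T.finite_toSet hm hm').comp
      ((hf.isQIEmbedding hK hC).comp (isQIEmbedding_id_wordDist hn' hn S.finite_toSet hS))⟩,
    _, (isQIEmbedding_id_wordDist hS S.finite_toSet hn hn').comp
      (hg.comp (isQIEmbedding_id_wordDist hm' hm T.finite_toSet hT))⟩

end GammaGroup

theorem gammaGroup_quasiIsometry_same_length_general {k l : ℕ} (n : Fin k → ℕ) (m : Fin l → ℕ)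
    (hn : ∀ i, n i ≠ 0) (hm : ∀ j, m j ≠ 0) (hn' : k ≠ 0 → ∃ i, 2 ≤ n i)
    (hm' : l ≠ 0 → ∃ j, 2 ≤ m j) (hqi : QuasiIsometricGroups (GammaGroup n) (GammaGroup m)) :
    k = l := by
  obtain ⟨⟨f, hf⟩, g, hg⟩ := GammaGroup.exists_isQIEmbedding_stdGens hqi
  exact (GammaGroup.le_of_isQIEmbedding hm' hn hn' hf).antisymm
    (GammaGroup.le_of_isQIEmbedding hn' hm hm' hg)

/-- If `Γ(S₁)` and `Γ(S₂)` are quasi-isometric, where `S₁ = (n₁,…,n_k)` and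
`S₂ = (m₁,…,m_l)` are tuples of pairwise coprime integers at least 2, then
`k = l`. -/
theorem gammaGroup_quasiIsometry_same_length
    {k l : ℕ} (n : Fin k → ℕ) (m : Fin l → ℕ)
    (hn2 : ∀ i, 2 ≤ n i) (hm2 : ∀ j, 2 ≤ m j)
    (hncop : ∀ i j, i ≠ j → Nat.Coprime (n i) (n j))
    (hmcop : ∀ i j, i ≠ j → Nat.Coprime (m i) (m j))
    (hqi : QuasiIsometricGroups (GammaGroup n) (GammaGroup m)) :
    k = l :=
  gammaGroup_quasiIsometry_same_length_general n m
    (fun i => (two_pos.trans_le (hn2 i)).ne') (fun j => (two_pos.trans_le (hm2 j)).ne')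
    (fun hk => ⟨⟨0, Nat.pos_of_ne_zero hk⟩, hn2 _⟩)
    (fun hl => ⟨⟨0, Nat.pos_of_ne_zero hl⟩, hm2 _⟩) hqi
end

section
/- Let S = (n₁,…,n_k) be a tuple of pairwise coprime integers n_i ≥ 2, and let φ : Γ(S) → ℤ^k be the surjective homomorphism with φ(a_i) = e_i and φ(b) = 0. Then the kernel of φ is an abelian subgroup of Γ(S); consequently Γ(S) is metabelian, i.e. its commutator subgroup is abelian, and in particular Γ(S) is solvable. -/
/-!
The relation `aᵢ⁻¹ b aᵢ = b ^ nᵢ` says that `⟨b⟩ ≤ aᵢ ⟨b⟩ aᵢ⁻¹`, so conjugating `⟨b⟩` by an element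
of the commutative monoid `T` generated by the `aᵢ` only enlarges it. The conjugates `t ⟨b⟩ t⁻¹`,
`t ∈ T`, therefore form a directed family of abelian subgroups, and their union `N` is abelian.
Conjugation by `aᵢ` restricts the family to the cofinal subfamily indexed by `aᵢ T`, so `N` is
normal. Modulo `N` the group is generated by the commuting `aᵢ`, so `eᵢ ↦ aᵢ N` defines a
homomorphism `ℤ^k → Γ / N`; its composite with `φ` is the quotient map, whence `ker φ ≤ N`.
-/

open scoped Pointwise

section ConjugateSup

variable {G : Type*} [Group G] {T : Submonoid G} {B : Subgroup G}

/-- The join of the conjugates `t B t⁻¹` with `t ∈ T`. When `T` is commutative and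
`B ≤ t B t⁻¹` for all `t ∈ T`, it is their directed union. -/
def conjSup (T : Submonoid G) (B : Subgroup G) : Subgroup G :=
  ⨆ t : T, MulAut.conj (t : G) • B

theorem conj_smul_le_conjSup {t : G} (ht : t ∈ T) : MulAut.conj t • B ≤ conjSup T B :=
  le_iSup (fun t : T ↦ MulAut.conj (t : G) • B) ⟨t, ht⟩

theorem le_conjSup : B ≤ conjSup T B := by
  simpa using conj_smul_le_conjSup (B := B) T.one_mem

theorem conj_smul_le_conj_mul_smul {s t : G} (ht : B ≤ MulAut.conj t • B) :
    MulAut.conj s • B ≤ MulAut.conj (s * t) • B := by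
  rw [map_mul, mul_smul]
  exact Subgroup.pointwise_smul_le_pointwise_smul_iff.mpr ht

theorem le_conj_smul_of_mem_closure {S : Set G} (hS : ∀ t ∈ S, B ≤ MulAut.conj t • B) {t : G}
    (ht : t ∈ Submonoid.closure S) : B ≤ MulAut.conj t • B := by
  induction ht using Submonoid.closure_induction with
  | mem t ht => exact hS t ht
  | one => simp
  | mul s t _ _ hs ht => exact hs.trans (conj_smul_le_conj_mul_smul ht)

theorem zpowers_le_conj_smul {a b : G} (h : a⁻¹ * b * a ∈ Subgroup.zpowers b) :
    Subgroup.zpowers b ≤ MulAut.conj a • Subgroup.zpowers b := by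
  rw [Subgroup.zpowers_le, Subgroup.mem_pointwise_smul_iff_inv_smul_mem]
  simpa [MulAut.smul_def, ← map_inv] using h

variable [IsMulCommutative T]

theorem directed_conj_smul (hTB : ∀ t ∈ T, B ≤ MulAut.conj t • B) :
    Directed (· ≤ ·) fun t : T ↦ MulAut.conj (t : G) • B := fun s t ↦
  ⟨s * t, conj_smul_le_conj_mul_smul (hTB t t.2), by
    rw [mul_comm' s t]
    exact conj_smul_le_conj_mul_smul (hTB s s.2)⟩

theorem isMulCommutative_conjSup [IsMulCommutative B] (hTB : ∀ t ∈ T, B ≤ MulAut.conj t • B) :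
    IsMulCommutative (conjSup T B) :=
  have (t : T) : IsMulCommutative (MulAut.conj (t : G) • B : Subgroup G) :=
    Subgroup.map_isMulCommutative B _
  Subgroup.isMulCommutative_iSup (directed_conj_smul hTB)

theorem mem_normalizer_conjSup (hTB : ∀ t ∈ T, B ≤ MulAut.conj t • B) {t : G} (ht : t ∈ T) :
    t ∈ Subgroup.normalizer (conjSup T B : Set G) := by
  suffices h : (conjSup T B).map (MulAut.conj t).toMonoidHom = conjSup T B from
    Subgroup.mem_normalizer_iff_map_conj_eq.mpr h
  have map_conj_smul (s : G) :
      (MulAut.conj s • B).map (MulAut.conj t).toMonoidHom = MulAut.conj (t * s) • B := by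
    rw [map_mul, mul_smul]
    rfl
  simp only [conjSup, Subgroup.map_iSup, map_conj_smul]
  refine le_antisymm (iSup_le fun s ↦ conj_smul_le_conjSup (mul_mem ht s.2)) (iSup_mono fun s ↦ ?_)
  rw [show t * s = s * t from congrArg Subtype.val (mul_comm' ⟨t, ht⟩ s)]
  exact conj_smul_le_conj_mul_smul (hTB t ht)

theorem conjSup_normal (hTB : ∀ t ∈ T, B ≤ MulAut.conj t • B)
    (hgen : Subgroup.closure (T ∪ B : Set G) = ⊤) : (conjSup T B).Normal := by
  rw [← Subgroup.normalizer_eq_top_iff, eq_top_iff, ← hgen, Subgroup.closure_le]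
  exact Set.union_subset (fun t ht ↦ mem_normalizer_conjSup hTB ht)
    (le_conjSup.trans Subgroup.le_normalizer)

end ConjugateSup

section Kernel

variable {ι G : Type*} [Finite ι] [DecidableEq ι] [Group G]

theorem exists_monoidHom_ofAdd_single {a : ι → G} (ha : ∀ i j, Commute (a i) (a j)) :
    ∃ ψ : Multiplicative (ι → ℤ) →* G, ∀ i, ψ (.ofAdd (Pi.single i 1)) = a i := by
  have := Fintype.ofFinite ι
  let f (i : ι) : Multiplicative ℤ →* G := zpowersHom G (a i)
  have commute_f : Pairwise fun i j ↦ ∀ x y, Commute (f i x) (f j y) :=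
    fun i j _ x y ↦ (ha i j).zpow_zpow x.toAdd y.toAdd
  let e : Multiplicative (ι → ℤ) ≃* (ι → Multiplicative ℤ) := MulEquiv.funMultiplicative ι ℤ
  have e_single (i : ι) : e (.ofAdd (Pi.single i 1)) = Pi.mulSingle i (.ofAdd 1) := rfl
  refine ⟨(MonoidHom.noncommPiCoprod f commute_f).comp e, fun i ↦ ?_⟩
  calc MonoidHom.noncommPiCoprod f commute_f (e (.ofAdd (Pi.single i 1)))
      = f i (.ofAdd 1) := by rw [e_single, MonoidHom.noncommPiCoprod_mulSingle]
    _ = a i := by simp [f]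

variable {a : ι → G} {φ : G →* Multiplicative (ι → ℤ)}

theorem ker_le_of_map_eq_ofAdd_single {s : Set G} {N : Subgroup G} [N.Normal]
    (ha : ∀ i j, Commute (a i) (a j)) (hgen : Subgroup.closure (Set.range a ∪ s) = ⊤)
    (hφa : ∀ i, φ (a i) = .ofAdd (Pi.single i 1)) (hφs : s ⊆ φ.ker) (hsN : s ⊆ N) :
    φ.ker ≤ N := by
  obtain ⟨ψ, hψ⟩ := exists_monoidHom_ofAdd_single fun i j ↦ (ha i j).map (QuotientGroup.mk' N)
  have comp_eq : ψ.comp φ = QuotientGroup.mk' N := by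
    refine MonoidHom.eq_of_eqOn_dense hgen ?_
    rintro x (⟨i, rfl⟩ | hx)
    · simp [hφa, hψ]
    · simp [MonoidHom.mem_ker.mp (hφs hx), (QuotientGroup.eq_one_iff x).mpr (hsN hx)]
  calc φ.ker ≤ ψ.ker.comap φ := Subgroup.ker_le_comap φ _
    _ = (QuotientGroup.mk' N).ker := by rw [MonoidHom.comap_ker, comp_eq]
    _ = N := QuotientGroup.ker_mk' N

theorem isMulCommutative_ker_of_le_conj_smul {B : Subgroup G} [IsMulCommutative B]
    (ha : ∀ i j, Commute (a i) (a j)) (haB : ∀ i, B ≤ MulAut.conj (a i) • B)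
    (hgen : Subgroup.closure (Set.range a ∪ B) = ⊤)
    (hφa : ∀ i, φ (a i) = .ofAdd (Pi.single i 1)) (hφB : B ≤ φ.ker) :
    IsMulCommutative φ.ker := by
  let T := Submonoid.closure (Set.range a)
  have : IsMulCommutative T :=
    Submonoid.isMulCommutative_closure G (Set.forall_mem_range.mpr fun i ↦
      Set.forall_mem_range.mpr fun j ↦ ha i j)
  have hTB : ∀ t ∈ T, B ≤ MulAut.conj t • B := fun t ht ↦
    le_conj_smul_of_mem_closure (Set.forall_mem_range.mpr haB) ht
  have : (conjSup T B).Normal := conjSup_normal hTB <| top_le_iff.mp <| hgen.ge.trans <|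
    Subgroup.closure_mono <| Set.union_subset_union_left _ Submonoid.subset_closure
  have ker_le : φ.ker ≤ conjSup T B :=
    ker_le_of_map_eq_ofAdd_single ha hgen hφa hφB le_conjSup
  have := isMulCommutative_conjSup hTB
  exact .of_setLike_mul_comm fun x hx y hy ↦ setLike_mul_comm (ker_le hx) (ker_le hy)

end Kernel

section GammaGroup

variable {k : ℕ} (n : Fin k → ℕ)

theorem gammaA_inv_mul_gammaB_mul_gammaA (i : Fin k) :
    (gammaA n i)⁻¹ * gammaB n * gammaA n i = gammaB n ^ n i :=
  PresentedGroup.mk_eq_mk_of_mul_inv_mem (Or.inl ⟨i, rfl⟩)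

theorem commute_gammaA (i j : Fin k) : Commute (gammaA n i) (gammaA n j) := by
  obtain rfl | hij := eq_or_ne i j
  · exact Commute.refl _
  · exact PresentedGroup.mk_eq_mk_of_mul_inv_mem (Or.inr ⟨i, j, hij, by group⟩)

theorem closure_range_gammaA_union_zpowers_gammaB :
    Subgroup.closure (Set.range (gammaA n) ∪ Subgroup.zpowers (gammaB n)) = ⊤ := by
  refine top_le_iff.mp ((PresentedGroup.closure_range_of (gammaRels n)).ge.trans
    (Subgroup.closure_mono ?_))
  rintro _ ⟨i | _, rfl⟩
  · exact Or.inl ⟨i, rfl⟩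
  · exact Or.inr (Subgroup.mem_zpowers (gammaB n))

theorem zpowers_gammaB_le_conj_smul (i : Fin k) :
    Subgroup.zpowers (gammaB n) ≤ MulAut.conj (gammaA n i) • Subgroup.zpowers (gammaB n) :=
  zpowers_le_conj_smul (by
    rw [gammaA_inv_mul_gammaB_mul_gammaA]
    exact Subgroup.npow_mem_zpowers _ _)

end GammaGroup

theorem gammaGroup_metabelian_general {k : ℕ} (n : Fin k → ℕ)
    (φ : GammaGroup n →* Multiplicative (Fin k → ℤ))
    (hA : ∀ i : Fin k, φ (gammaA n i) = Multiplicative.ofAdd (Pi.single i 1))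
    (hB : φ (gammaB n) = 1) :
    (∀ x y : (MonoidHom.ker φ), x * y = y * x) ∧
    (∀ x y : commutator (GammaGroup n), x * y = y * x) ∧
    Group.IsSolvable (GammaGroup n) := by
  have : IsMulCommutative φ.ker :=
    isMulCommutative_ker_of_le_conj_smul (commute_gammaA n) (zpowers_gammaB_le_conj_smul n)
      (closure_range_gammaA_union_zpowers_gammaB n) hA (Subgroup.zpowers_le.mpr hB)
  have commutator_le : commutator (GammaGroup n) ≤ φ.ker :=
    Abelianization.commutator_subset_ker φ
  have : Group.IsSolvable φ.ker := Group.isSolvable_of_comm mul_comm'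
  refine ⟨mul_comm', fun x y ↦ Subtype.ext ?_, ?_⟩
  · exact setLike_mul_comm (commutator_le x.2) (commutator_le y.2)
  · exact Group.isSolvable_of_ker_le_range φ.ker.subtype φ (Subgroup.range_subtype _).ge

/-- The kernel of the projection `φ : Γ(S) → ℤ^k` (with `φ(aᵢ) = eᵢ`,
`φ(b) = 0`) is abelian; consequently `Γ(S)` is metabelian, and in particular
solvable. -/
theorem gammaGroup_metabelian {k : ℕ} (n : Fin k → ℕ)
    (hn2 : ∀ i, 2 ≤ n i) (hcop : ∀ i j, i ≠ j → Nat.Coprime (n i) (n j))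
    (φ : GammaGroup n →* Multiplicative (Fin k → ℤ))
    (hsurj : Function.Surjective φ)
    (hA : ∀ i : Fin k, φ (gammaA n i) = Multiplicative.ofAdd (Pi.single i 1))
    (hB : φ (gammaB n) = 1) :
    (∀ x y : (MonoidHom.ker φ), x * y = y * x) ∧
    (∀ x y : commutator (GammaGroup n), x * y = y * x) ∧
    IsSolvable (GammaGroup n) := by
  exact gammaGroup_metabelian_general n φ hA hB
end
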